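/- arXiv:1603.01577 — 4 statements merged into one kernel-verified Lean document; each statement's English description precedes it below -/
import Mathlib

section
/- Every symmetric bilinear form β on ℝ³ ⊕ (ℝ³)* satisfying β(A·v, w) + β(v, A·w) = 0 for every A ∈ sl(3,ℝ) and all v, w is a real scalar multiple of B: there exists c ∈ ℝ with β = c·B. -/
/-- The module `ℝ³ ⊕ (ℝ³)*`. -/
abbrev Vmod : Type := (Fin 3 → ℝ) × Module.Dual ℝ (Fin 3 → ℝ)

/-- The standard `sl(3,ℝ)`-module structure on `ℝ³ ⊕ (ℝ³)*`:
`A · (p, q) = (A p, −q ∘ A)`. -/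
def slAct (A : Matrix (Fin 3) (Fin 3) ℝ) (v : Vmod) : Vmod :=
  (A.mulVec v.1, -(v.2 ∘ₗ A.mulVecLin))

/-- The bilinear form `B((p,q),(p′,q′)) = q(p′) + q′(p)` on `ℝ³ ⊕ (ℝ³)*`. -/
def Bform (v w : Vmod) : ℝ := v.2 w.1 + w.2 v.1

/-- Basis vectors of the summand `ℝ³`. -/
def ee (i : Fin 3) : Vmod := (Pi.single i 1, 0)

/-- Dual basis vectors. -/
def ff (i : Fin 3) : Vmod := (0, LinearMap.proj i)

lemma vmod_expand (v : Vmod) :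
    v = ∑ i, v.1 i • ee i + ∑ i, v.2 (Pi.single i 1) • ff i := by
  refine Prod.ext ?_ ?_
  · funext k
    fin_cases k <;> simp [ee, ff, Fin.sum_univ_three]
  · refine LinearMap.pi_ext' fun k => LinearMap.ext_ring ?_
    fin_cases k <;> simp [ee, ff, Fin.sum_univ_three]

lemma slAct_diag_ee (d : Fin 3 → ℝ) (i : Fin 3) :
    slAct (Matrix.diagonal d) (ee i) = d i • ee i := by
  refine Prod.ext ?_ ?_
  · funext k
    simp [slAct, ee, Matrix.mulVec_diagonal, Pi.single_apply]
  · simp [slAct, ee]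

lemma slAct_diag_ff (d : Fin 3 → ℝ) (i : Fin 3) :
    slAct (Matrix.diagonal d) (ff i) = (- d i) • ff i := by
  refine Prod.ext ?_ ?_
  · simp [slAct, ff]
  · refine LinearMap.ext fun x => ?_
    simp [slAct, ff, Matrix.mulVec_diagonal]

lemma slAct_single_ee (i j : Fin 3) :
    slAct (Matrix.single i j 1) (ee j) = ee i := by
  refine Prod.ext ?_ ?_
  · funext k
    simp [slAct, ee, Matrix.single_apply, Pi.single_apply, eq_comm]
  · simp [slAct, ee]

lemma slAct_single_ff (i j : Fin 3) :
    slAct (Matrix.single i j 1) (ff i) = - ff j := by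
  refine Prod.ext ?_ ?_
  · simp [slAct, ff]
  · refine LinearMap.ext fun x => ?_
    simp [slAct, ff, Matrix.single_mulVec]

/-- Every symmetric `sl(3,ℝ)`-invariant bilinear form on `ℝ³ ⊕ (ℝ³)*` is a real scalar
multiple of `B`. -/
theorem invariant_symmetric_bilinear_eq_smul_Bform
    (β : LinearMap.BilinForm ℝ Vmod)
    (hsymm : ∀ v w : Vmod, β v w = β w v)
    (hinv : ∀ A : Matrix (Fin 3) (Fin 3) ℝ, A.trace = 0 →
      ∀ v w : Vmod, β (slAct A v) w + β v (slAct A w) = 0) :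
    ∃ c : ℝ, ∀ v w : Vmod, β v w = c * Bform v w := by
  set d : Fin 3 → Fin 3 → ℝ := fun i k => if k = i then 2 else -1 with hd
  have htr : ∀ i, (Matrix.diagonal (d i)).trace = 0 := by
    intro i
    rw [Matrix.trace_diagonal]
    fin_cases i <;> simp [hd, Fin.sum_univ_three] <;> norm_num
  have hee : ∀ i j, β (ee i) (ee j) = 0 := by
    intro i j
    have h := hinv _ (htr i) (ee i) (ee j)
    rw [slAct_diag_ee, slAct_diag_ee] at h
    simp only [map_smul, LinearMap.smul_apply, smul_eq_mul, hd] at h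
    split_ifs at h <;> simp_all <;> linarith
  have hff : ∀ i j, β (ff i) (ff j) = 0 := by
    intro i j
    have h := hinv _ (htr i) (ff i) (ff j)
    rw [slAct_diag_ff, slAct_diag_ff] at h
    simp only [map_smul, LinearMap.smul_apply, smul_eq_mul, hd] at h
    split_ifs at h <;> simp_all <;> linarith
  have hef : ∀ i j, i ≠ j → β (ee i) (ff j) = 0 := by
    intro i j hij
    have h := hinv _ (htr i) (ee i) (ff j)
    rw [slAct_diag_ee, slAct_diag_ff] at h
    simp only [map_smul, LinearMap.smul_apply, smul_eq_mul, hd, if_neg hij.symm, if_true] at h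
    linarith
  have hdiag : ∀ i j, i ≠ j → β (ee i) (ff i) = β (ee j) (ff j) := by
    intro i j hij
    have h := hinv (Matrix.single i j 1) (Matrix.trace_single_eq_of_ne i j 1 hij) (ee j) (ff i)
    rw [slAct_single_ee, slAct_single_ff, map_neg] at h
    linarith
  have hEF : ∀ i j, β (ee i) (ff j) = if i = j then β (ee 0) (ff 0) else 0 := by
    intro i j
    split_ifs with h
    · subst h
      by_cases h0 : i = 0
      · rw [h0]
      · exact hdiag i 0 h0
    · exact hef i j h
  have hFE : ∀ i j, β (ff i) (ee j) = if j = i then β (ee 0) (ff 0) else 0 := by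
    intro i j
    rw [hsymm, hEF]
  refine ⟨β (ee 0) (ff 0), fun v w => ?_⟩
  have key : ∀ (q : Module.Dual ℝ (Fin 3 → ℝ)) (p : Fin 3 → ℝ),
      q p = ∑ i, p i * q (Pi.single i 1) := by
    intro q p
    conv_lhs => rw [pi_eq_sum_univ' p]
    simp [map_sum, Pi.single_apply, Pi.single, Function.update]
  generalize hc : β (ee 0) (ff 0) = c at *
  rw [Bform, key v.2, key w.2]
  conv_lhs => rw [vmod_expand v, vmod_expand w]
  simp only [Fin.sum_univ_three, map_add, map_smul, LinearMap.add_apply, LinearMap.smul_apply,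
    smul_eq_mul, hee, hff, hEF, hFE]
  simp
  ring
end

section
/- A 6×6 real matrix X, written in 3×3 blocks as X = [[P,Q],[R,S]], lies in so(3,3) if and only if S = −Pᵀ and Q, R are skew-symmetric. Consequently so(3,3) decomposes as the internal direct sum so(3,3) = 𝔤 ⊕ 𝔠 ⊕ 𝔳* ⊕ 𝔳, where 𝔤 = ι(sl(3,ℝ)), 𝔠 = ℝ·[[I₃,0],[0,−I₃]], 𝔳* = {[[0,Q],[0,0]] : Qᵀ = −Q}, and 𝔳 = {[[0,0],[R,0]] : Rᵀ = −R}. Each of these four subspaces is invariant under X ↦ [ι(A), X] for every A ∈ sl(3,ℝ), and as sl(3,ℝ)-modules: 𝔤 is equivariantly isomorphic to the adjoint module sl(3,ℝ), 𝔠 is a trivial 1-dimensional module, 𝔳 is equivariantly isomorphic to the standard module ℝ³ (action v ↦ A v), and 𝔳* is equivariantly isomorphic to the dual module (ℝ³)* (action q ↦ −q∘A). -/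
open Matrix

abbrev M33 := Matrix (Fin 3) (Fin 3) ℝ
abbrev M66 := Matrix (Fin 3 ⊕ Fin 3) (Fin 3 ⊕ Fin 3) ℝ

/-- The matrix `J = [[0,I₃],[I₃,0]]` defining `so(3,3)`. -/
def Jmat : M66 := Matrix.fromBlocks 0 1 1 0

/-- Membership in `so(3,3)`: `XᵀJ + JX = 0`. -/
def InSO33 (X : M66) : Prop := Xᵀ * Jmat + Jmat * X = 0

/-- The embedding `ι : sl(3,ℝ) → so(3,3)`, `A ↦ [[A,0],[0,−Aᵀ]]`. -/
def iotaMat (A : M33) : M66 := Matrix.fromBlocks A 0 0 (-Aᵀ)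

/-- The subspace `𝔤 = ι(sl(3,ℝ))`. -/
def gSub : Submodule ℝ M66 where
  carrier := {X | ∃ A : M33, A.trace = 0 ∧ X = iotaMat A}
  zero_mem' := ⟨0, by simp, by simp [iotaMat]⟩
  add_mem' := by
    rintro X Y ⟨A, hA, rfl⟩ ⟨B, hB, rfl⟩
    exact ⟨A + B, by simp [hA, hB],
      by simp [iotaMat, Matrix.fromBlocks_add, Matrix.transpose_add, neg_add, add_comm]⟩
  smul_mem' := by
    rintro c X ⟨A, hA, rfl⟩
    exact ⟨c • A, by simp [hA],
      by simp [iotaMat, Matrix.fromBlocks_smul, Matrix.transpose_smul]⟩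

/-- The subspace `𝔠 = ℝ·[[I₃,0],[0,−I₃]]`. -/
def cSub : Submodule ℝ M66 :=
  Submodule.span ℝ {Matrix.fromBlocks (1 : M33) 0 0 (-1)}

/-- The subspace `𝔳* = {[[0,Q],[0,0]] : Qᵀ = −Q}`. -/
def vstarSub : Submodule ℝ M66 where
  carrier := {X | ∃ Q : M33, Qᵀ = -Q ∧ X = Matrix.fromBlocks 0 Q 0 0}
  zero_mem' := ⟨0, by simp, by simp⟩
  add_mem' := by
    rintro X Y ⟨Q, hQ, rfl⟩ ⟨Q', hQ', rfl⟩
    exact ⟨Q + Q', by simp [hQ, hQ', Matrix.transpose_add, neg_add, add_comm],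
      by simp [Matrix.fromBlocks_add]⟩
  smul_mem' := by
    rintro c X ⟨Q, hQ, rfl⟩
    exact ⟨c • Q, by simp [Matrix.transpose_smul, hQ],
      by simp [Matrix.fromBlocks_smul]⟩

/-- The subspace `𝔳 = {[[0,0],[R,0]] : Rᵀ = −R}`. -/
def vSub : Submodule ℝ M66 where
  carrier := {X | ∃ R : M33, Rᵀ = -R ∧ X = Matrix.fromBlocks 0 0 R 0}
  zero_mem' := ⟨0, by simp, by simp⟩
  add_mem' := by
    rintro X Y ⟨Q, hQ, rfl⟩ ⟨Q', hQ', rfl⟩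
    exact ⟨Q + Q', by simp [hQ, hQ', Matrix.transpose_add, neg_add, add_comm],
      by simp [Matrix.fromBlocks_add]⟩
  smul_mem' := by
    rintro c X ⟨Q, hQ, rfl⟩
    exact ⟨c • Q, by simp [Matrix.transpose_smul, hQ],
      by simp [Matrix.fromBlocks_smul]⟩

/-- `sl(3,ℝ)` as a submodule of `M33`. -/
def slSub : Submodule ℝ M33 := LinearMap.ker (Matrix.traceLinearMap (Fin 3) ℝ ℝ)

/-- Bracket action of a traceless matrix on `slSub` (adjoint action). -/
def adAct (A : M33) (X : slSub) : slSub :=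
  ⟨⁅A, (X : M33)⁆, by
    have : Matrix.trace ⁅A, (X : M33)⁆ = 0 := LieAlgebra.matrix_trace_commutator_zero _ _ _ _
    simp [slSub, LinearMap.mem_ker, this]⟩

/-- The skew matrix of a vector. -/
def crossM (v : Fin 3 → ℝ) : M33 := !![0, -v 2, v 1; v 2, 0, -v 0; -v 1, v 0, 0]

theorem crossM_skew (v : Fin 3 → ℝ) : (crossM v)ᵀ = -crossM v := by
  ext i j
  fin_cases i <;> fin_cases j <;> simp [crossM]

theorem crossM_add (v w : Fin 3 → ℝ) : crossM (v + w) = crossM v + crossM w := by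
  ext i j
  fin_cases i <;> fin_cases j <;> simp [crossM] <;> ring

theorem crossM_smul (c : ℝ) (v : Fin 3 → ℝ) : crossM (c • v) = c • crossM v := by
  ext i j
  fin_cases i <;> fin_cases j <;> simp [crossM]

/-- The vector of a skew matrix. -/
def uncross (R : M33) : Fin 3 → ℝ := ![R 2 1, R 0 2, R 1 0]

theorem uncross_crossM (v : Fin 3 → ℝ) : uncross (crossM v) = v := by
  ext i
  fin_cases i <;> simp [crossM, uncross]

theorem crossM_uncross (R : M33) (h : Rᵀ = -R) : crossM (uncross R) = R := by
  have h' : ∀ i j, R j i = -R i j := fun i j => congrFun (congrFun h i) j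
  have h0 := h' 0 0
  have h1 := h' 1 1
  have h2 := h' 2 2
  have h3 := h' 0 1
  have h4 := h' 0 2
  have h5 := h' 1 2
  ext i j
  fin_cases i <;> fin_cases j <;> simp [crossM, uncross] <;> linarith

theorem crossM_std (A : M33) (h : A.trace = 0) (v : Fin 3 → ℝ) :
    crossM (A.mulVec v) = -(Aᵀ * crossM v) - crossM v * A := by
  have h2 : A 2 2 = -A 0 0 - A 1 1 := by
    rw [Matrix.trace_fin_three] at h
    linarith
  ext i j
  fin_cases i <;> fin_cases j <;>
    simp [crossM, Matrix.mul_apply, Matrix.mulVec, Matrix.vecMul, dotProduct,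
      Fin.sum_univ_three, h2] <;> ring

theorem crossM_dual (A : M33) (h : A.trace = 0) (v : Fin 3 → ℝ) :
    crossM (-(Aᵀ.mulVec v)) = A * crossM v + crossM v * Aᵀ := by
  have h' : (-Aᵀ).trace = 0 := by simp [h]
  have := crossM_std (-Aᵀ) h' v
  rw [Matrix.neg_mulVec] at this
  rw [this]
  simp

theorem mem_gSub (X : M66) : X ∈ gSub ↔ ∃ A : M33, A.trace = 0 ∧ X = iotaMat A := Iff.rfl
theorem mem_vSub (X : M66) :
    X ∈ vSub ↔ ∃ R : M33, Rᵀ = -R ∧ X = Matrix.fromBlocks 0 0 R 0 := Iff.rfl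
theorem mem_vstarSub (X : M66) :
    X ∈ vstarSub ↔ ∃ R : M33, Rᵀ = -R ∧ X = Matrix.fromBlocks 0 R 0 0 := Iff.rfl
theorem mem_cSub (X : M66) :
    X ∈ cSub ↔ ∃ c : ℝ, X = Matrix.fromBlocks (c • (1 : M33)) 0 0 (-(c • (1 : M33))) := by
  simp [cSub, Submodule.mem_span_singleton, Matrix.fromBlocks_smul, eq_comm]

theorem brk_g (A B : M33) : ⁅iotaMat A, iotaMat B⁆ = iotaMat ⁅A, B⁆ := by
  simp [Ring.lie_def, iotaMat, Matrix.fromBlocks_multiply, sub_eq_add_neg, Matrix.fromBlocks_add,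
    Matrix.fromBlocks_neg, add_comm]

theorem brk_v (A R : M33) : ⁅iotaMat A, (Matrix.fromBlocks 0 0 R 0 : M66)⁆ =
    Matrix.fromBlocks 0 0 (-(Aᵀ * R) - R * A) 0 := by
  simp [Ring.lie_def, iotaMat, Matrix.fromBlocks_multiply, sub_eq_add_neg, Matrix.fromBlocks_add,
    Matrix.fromBlocks_neg]

theorem brk_vstar (A R : M33) : ⁅iotaMat A, (Matrix.fromBlocks 0 R 0 0 : M66)⁆ =
    Matrix.fromBlocks 0 (A * R + R * Aᵀ) 0 0 := by
  simp [Ring.lie_def, iotaMat, Matrix.fromBlocks_multiply, sub_eq_add_neg, Matrix.fromBlocks_add,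
    Matrix.fromBlocks_neg]

theorem brk_c (A : M33) (X : M66) (hX : X ∈ cSub) : ⁅iotaMat A, X⁆ = 0 := by
  obtain ⟨c, rfl⟩ := (mem_cSub X).1 hX
  simp [Ring.lie_def, iotaMat, Matrix.fromBlocks_multiply]

theorem so33_block (P Q R S : M33) : InSO33 (Matrix.fromBlocks P Q R S) ↔
      (S = -Pᵀ ∧ Qᵀ = -Q ∧ Rᵀ = -R) := by
  have h0 : (0 : M66) = Matrix.fromBlocks 0 0 0 0 := by simp
  unfold InSO33 Jmat
  rw [Matrix.fromBlocks_transpose, Matrix.fromBlocks_multiply, Matrix.fromBlocks_multiply,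
    Matrix.fromBlocks_add, h0, Matrix.fromBlocks_inj]
  simp only [mul_zero, mul_one, zero_mul, one_mul, zero_add, add_zero]
  constructor
  · rintro ⟨h1, h2, h3, h4⟩
    exact ⟨eq_neg_of_add_eq_zero_right h2, eq_neg_of_add_eq_zero_left h4,
      eq_neg_of_add_eq_zero_left h1⟩
  · rintro ⟨rfl, h2, h3⟩
    simp [h2, h3]

theorem iotaMat_add (A B : M33) : iotaMat (A + B) = iotaMat A + iotaMat B := by
  simp only [iotaMat, Matrix.fromBlocks_add, Matrix.transpose_add, neg_add, add_zero]

theorem iotaMat_smul (c : ℝ) (A : M33) : iotaMat (c • A) = c • iotaMat A := by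
  simp only [iotaMat, Matrix.fromBlocks_smul, Matrix.transpose_smul, smul_neg, smul_zero]

theorem iotaMat_toBlocks (A : M33) : (iotaMat A).toBlocks₁₁ = A :=
  Matrix.toBlocks_fromBlocks₁₁ _ _ _ _

/-- The isomorphism of the adjoint module with its image. -/
def gEquiv : slSub ≃ₗ[ℝ] gSub where
  toFun X := ⟨iotaMat (X : M33), (X : M33), X.2, rfl⟩
  map_add' X Y := Subtype.ext (iotaMat_add X.1 Y.1)
  map_smul' c X := Subtype.ext (iotaMat_smul c X.1)
  invFun Y := ⟨(Y : M66).toBlocks₁₁, by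
    obtain ⟨A, hA, h⟩ := (mem_gSub _).1 Y.2
    rw [h, iotaMat_toBlocks]
    exact hA⟩
  left_inv X := Subtype.ext (iotaMat_toBlocks X.1)
  right_inv Y := by
    obtain ⟨A, hA, h⟩ := (mem_gSub _).1 Y.2
    refine Subtype.ext ?_
    change iotaMat (Y : M66).toBlocks₁₁ = Y
    rw [h, iotaMat_toBlocks]

/-- The isomorphism of the standard module. -/
def vEquiv : (Fin 3 → ℝ) ≃ₗ[ℝ] vSub where
  toFun v := ⟨Matrix.fromBlocks 0 0 (crossM v) 0, crossM v, crossM_skew v, rfl⟩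
  map_add' X Y := by
    ext1
    simp [crossM_add, Matrix.fromBlocks_add]
  map_smul' c X := by
    ext1
    simp [crossM_smul, Matrix.fromBlocks_smul]
  invFun Y := uncross (Y : M66).toBlocks₂₁
  left_inv X := by
    simp [uncross_crossM]
  right_inv Y := by
    ext1
    obtain ⟨A, hA, h⟩ := (mem_vSub _).1 Y.2
    simp only [h]
    simp [crossM_uncross A hA]

/-- The isomorphism of coordinates with the upper skew block. -/
def vstarEquiv : (Fin 3 → ℝ) ≃ₗ[ℝ] vstarSub where
  toFun v := ⟨Matrix.fromBlocks 0 (crossM v) 0 0, crossM v, crossM_skew v, rfl⟩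
  map_add' X Y := by
    ext1
    simp [crossM_add, Matrix.fromBlocks_add]
  map_smul' c X := by
    ext1
    simp [crossM_smul, Matrix.fromBlocks_smul]
  invFun Y := uncross (Y : M66).toBlocks₁₂
  left_inv X := by
    simp [uncross_crossM]
  right_inv Y := by
    ext1
    obtain ⟨A, hA, h⟩ := (mem_vstarSub _).1 Y.2
    simp only [h]
    simp [crossM_uncross A hA]

/-- Coordinates on the dual space. -/
noncomputable def dualCoord : Module.Dual ℝ (Fin 3 → ℝ) ≃ₗ[ℝ] (Fin 3 → ℝ) :=
  ((Pi.basisFun ℝ (Fin 3)).constr ℝ).symm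

theorem dualCoord_apply (q : Module.Dual ℝ (Fin 3 → ℝ)) (i : Fin 3) :
    dualCoord q i = q (Pi.single i 1) := by
  simp [dualCoord, Module.Basis.constr]

theorem dualCoord_act (A : M33) (q : Module.Dual ℝ (Fin 3 → ℝ)) :
    dualCoord (-(q ∘ₗ A.mulVecLin)) = -(Aᵀ.mulVec (dualCoord q)) := by
  ext j
  have h : A.col j = ∑ i, A i j • (Pi.single i (1 : ℝ) : Fin 3 → ℝ) := by
    ext k
    simp [Pi.single_apply]
  simp only [dualCoord_apply, LinearMap.neg_apply, LinearMap.comp_apply, Matrix.mulVecLin_apply,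
    Matrix.mulVec_single_one, Pi.neg_apply, h, map_sum, map_smul, Matrix.mulVec, dotProduct,
    Matrix.transpose_apply, smul_eq_mul]

/-- Block characterization of `so(3,3)` and its decomposition
`so(3,3) = 𝔤 ⊕ 𝔠 ⊕ 𝔳* ⊕ 𝔳` into `sl(3,ℝ)`-submodules, together with the identification of
each summand as an `sl(3,ℝ)`-module. -/
theorem so33_block_characterization_and_decomposition :
    -- block characterization of membership in so(3,3)
    (∀ P Q R S : M33, InSO33 (Matrix.fromBlocks P Q R S) ↔
      (S = -Pᵀ ∧ Qᵀ = -Q ∧ Rᵀ = -R)) ∧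
    -- existence of the decomposition: so(3,3) = 𝔤 + 𝔠 + 𝔳* + 𝔳
    (∀ X : M66, InSO33 X ↔
      ∃ a ∈ gSub, ∃ c ∈ cSub, ∃ q ∈ vstarSub, ∃ r ∈ vSub, X = a + c + q + r) ∧
    -- uniqueness of the decomposition (internal direct sum)
    (∀ (a a' : gSub) (c c' : cSub) (q q' : vstarSub) (r r' : vSub),
      (a : M66) + c + q + r = (a' : M66) + c' + q' + r' →
        a = a' ∧ c = c' ∧ q = q' ∧ r = r') ∧
    -- each summand is invariant under `X ↦ ⁅ι A, X⁆` for `A ∈ sl(3,ℝ)`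
    (∀ A : M33, A.trace = 0 →
      (∀ X ∈ gSub, ⁅iotaMat A, X⁆ ∈ gSub) ∧
      (∀ X ∈ cSub, ⁅iotaMat A, X⁆ ∈ cSub) ∧
      (∀ X ∈ vstarSub, ⁅iotaMat A, X⁆ ∈ vstarSub) ∧
      (∀ X ∈ vSub, ⁅iotaMat A, X⁆ ∈ vSub)) ∧
    -- 𝔤 is equivariantly isomorphic to the adjoint module sl(3,ℝ)
    (∃ φ : slSub ≃ₗ[ℝ] gSub, ∀ (A : M33) (_ : A.trace = 0) (X : slSub),
      (φ (adAct A X) : M66) = ⁅iotaMat A, (φ X : M66)⁆) ∧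
    -- 𝔠 is a trivial 1-dimensional module
    (Module.finrank ℝ cSub = 1 ∧
      ∀ A : M33, A.trace = 0 → ∀ X ∈ cSub, ⁅iotaMat A, X⁆ = 0) ∧
    -- 𝔳 is equivariantly isomorphic to the standard module ℝ³
    (∃ φ : (Fin 3 → ℝ) ≃ₗ[ℝ] vSub, ∀ (A : M33) (_ : A.trace = 0) (v : Fin 3 → ℝ),
      (φ (A.mulVec v) : M66) = ⁅iotaMat A, (φ v : M66)⁆) ∧
    -- 𝔳* is equivariantly isomorphic to the dual module (ℝ³)*
    (∃ ψ : Module.Dual ℝ (Fin 3 → ℝ) ≃ₗ[ℝ] vstarSub,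
      ∀ (A : M33) (_ : A.trace = 0) (q : Module.Dual ℝ (Fin 3 → ℝ)),
        (ψ (-(q ∘ₗ A.mulVecLin)) : M66) = ⁅iotaMat A, (ψ q : M66)⁆) := by
  refine ⟨so33_block, ?_, ?_, ?_, ⟨gEquiv, ?_⟩, ⟨?_, fun A _ X hX => brk_c A X hX⟩, ⟨vEquiv, ?_⟩,
    ⟨dualCoord.trans vstarEquiv, ?_⟩⟩
  · intro X
    constructor
    · intro hX
      rw [← Matrix.fromBlocks_toBlocks X, so33_block] at hX
      obtain ⟨h1, h2, h3⟩ := hX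
      generalize hP : X.toBlocks₁₁ = P at *
      generalize hQ : X.toBlocks₁₂ = Q at *
      generalize hR : X.toBlocks₂₁ = R at *
      refine ⟨iotaMat (P - (P.trace / 3) • (1 : M33)), ⟨_, ?_, rfl⟩, _,
        (mem_cSub _).2 ⟨P.trace / 3, rfl⟩, _, ⟨Q, h2, rfl⟩, _, ⟨R, h3, rfl⟩, ?_⟩
      · simp [Matrix.trace_sub, Matrix.trace_smul]
      · rw [← Matrix.fromBlocks_toBlocks X, hP, hQ, hR, h1]
        simp [iotaMat, Matrix.fromBlocks_add]
        abel
    · rintro ⟨a, ha, c, hc, q, hq, r, hr, rfl⟩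
      obtain ⟨A, hA, rfl⟩ := (mem_gSub _).1 ha
      obtain ⟨c, rfl⟩ := (mem_cSub _).1 hc
      obtain ⟨Q, hQ, rfl⟩ := (mem_vstarSub _).1 hq
      obtain ⟨R, hR, rfl⟩ := (mem_vSub _).1 hr
      simp only [iotaMat, Matrix.fromBlocks_add]
      rw [so33_block]
      simp [hQ, hR, add_comm]
  · rintro ⟨a, ha⟩ ⟨a', ha'⟩ ⟨c, hc⟩ ⟨c', hc'⟩ ⟨q, hq⟩ ⟨q', hq'⟩ ⟨r, hr⟩ ⟨r', hr'⟩ h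
    obtain ⟨A, hA, rfl⟩ := (mem_gSub _).1 ha
    obtain ⟨c, rfl⟩ := (mem_cSub _).1 hc
    obtain ⟨Q, hQ, rfl⟩ := (mem_vstarSub _).1 hq
    obtain ⟨R, hR, rfl⟩ := (mem_vSub _).1 hr
    obtain ⟨A', hA', rfl⟩ := (mem_gSub _).1 ha'
    obtain ⟨c', rfl⟩ := (mem_cSub _).1 hc'
    obtain ⟨Q', hQ', rfl⟩ := (mem_vstarSub _).1 hq'
    obtain ⟨R', hR', rfl⟩ := (mem_vSub _).1 hr'
    simp only [iotaMat, Matrix.fromBlocks_add, Matrix.fromBlocks_inj, add_zero, zero_add] at h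
    obtain ⟨h1, h2, h3, h4⟩ := h
    have ht := congrArg Matrix.trace h1
    simp [Matrix.trace_add, Matrix.trace_smul, hA, hA'] at ht
    subst ht h2 h3
    have := add_right_cancel h1
    subst this
    simp
  · intro A hA
    refine ⟨?_, ?_, ?_, ?_⟩
    · rintro X ⟨B, hB, rfl⟩
      exact ⟨_, LieAlgebra.matrix_trace_commutator_zero _ _ A B, brk_g A B⟩
    · intro X hX
      rw [brk_c A X hX]
      exact zero_mem _
    · rintro X ⟨Q, hQ, rfl⟩
      exact ⟨_, by simp [hQ, add_comm], brk_vstar A Q⟩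
    · rintro X ⟨R, hR, rfl⟩
      exact ⟨_, by simp [hR, sub_eq_add_neg, add_comm], brk_v A R⟩
  · intro A _ X
    exact (brk_g A X).symm
  · refine finrank_span_singleton ?_
    intro h
    have := congrFun (congrFun h (Sum.inl 0)) (Sum.inl 0)
    simp at this
  · intro A hA v
    refine Eq.trans ?_ (brk_v A (crossM v)).symm
    rw [← crossM_std A hA]
    rfl
  · intro A hA q
    refine Eq.trans ?_ (brk_vstar A (crossM (dualCoord q))).symm
    rw [← crossM_dual A hA, ← dualCoord_act]
    rfl
end

section
/- Let L be a finite-dimensional simple real Lie algebra whose complexification ℂ ⊗_ℝ L is a simple complex Lie algebra. Then every symmetric bilinear form β on L satisfying β([Z,X], Y) + β(X, [Z,Y]) = 0 for all X, Y, Z ∈ L is a real scalar multiple of the Killing form of L: there exists c ∈ ℝ with β = c·κ_L, where κ_L(X,Y) = trace(ad(X) ∘ ad(Y)). -/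
open scoped TensorProduct

/-- If `L` is a finite-dimensional simple real Lie algebra whose complexification is a simple
complex Lie algebra, then every invariant symmetric bilinear form on `L` is a real scalar
multiple of the Killing form `κ_L(X,Y) = trace(ad X ∘ ad Y)`. -/
theorem invariant_form_eq_smul_killingForm
    (L : Type*) [LieRing L] [LieAlgebra ℝ L] [FiniteDimensional ℝ L]
    [LieAlgebra.IsSimple ℝ L] [LieAlgebra.IsSimple ℂ (ℂ ⊗[ℝ] L)]
    (β : LinearMap.BilinForm ℝ L)
    (hsymm : ∀ X Y : L, β X Y = β Y X)
    (hinv : ∀ Z X Y : L, β ⁅Z, X⁆ Y + β X ⁅Z, Y⁆ = 0) :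
    ∃ c : ℝ, ∀ X Y : L,
      β X Y = c * LinearMap.trace ℝ L ((LieAlgebra.ad ℝ L X) ∘ₗ (LieAlgebra.ad ℝ L Y)) := by
  have hnd : (killingForm ℝ L).Nondegenerate := LieAlgebra.IsKilling.killingForm_nondegenerate ℝ L
  -- the endomorphism representing `β` with respect to the Killing form
  let e := LinearMap.BilinForm.toDual (killingForm ℝ L) hnd
  let T : L →ₗ[ℝ] L := e.symm.toLinearMap ∘ₗ β
  have hT : ∀ x y, killingForm ℝ L (T x) y = β x y := by
    intro x y
    have : e (T x) = β x := e.apply_symm_apply (β x)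
    rw [← this]
    rfl
  have hcomm : ∀ z x : L, T ⁅z, x⁆ = ⁅z, T x⁆ := by
    intro z x
    apply e.injective
    ext y
    change killingForm ℝ L (T ⁅z, x⁆) y = killingForm ℝ L ⁅z, T x⁆ y
    have h1 := hinv z x y
    have h2 : killingForm ℝ L ⁅z, T x⁆ y = - killingForm ℝ L (T x) ⁅z, y⁆ :=
      LieModule.traceForm_apply_lie_apply' ℝ L L z (T x) y
    rw [h2, hT, hT]
    linarith
  let S : Module.End ℂ (ℂ ⊗[ℝ] L) := T.baseChange ℂ
  have la : ∀ z a b : ℂ ⊗[ℝ] L, ⁅z, a + b⁆ = ⁅z, a⁆ + ⁅z, b⁆ := fun z a b => lie_add z a b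
  have l0 : ∀ z : ℂ ⊗[ℝ] L, ⁅z, (0 : ℂ ⊗[ℝ] L)⁆ = 0 := fun z => lie_zero z
  have ls : ∀ (t : ℂ) (z a : ℂ ⊗[ℝ] L), ⁅z, t • a⁆ = t • ⁅z, a⁆ := fun t z a => lie_smul t z a
  have hS : ∀ z x : ℂ ⊗[ℝ] L, S ⁅z, x⁆ = ⁅z, S x⁆ := by
    intro z x
    induction z using TensorProduct.induction_on with
    | zero => simp
    | add a b ha hb => simp only [add_lie, map_add, ha, hb]
    | tmul a z =>
      induction x using TensorProduct.induction_on with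
      | zero => simp only [l0, map_zero]
      | add a b ha hb => simp only [la, map_add, ha, hb]
      | tmul b x => simp [S, hcomm]
  have hna := LieAlgebra.IsSimple.non_abelian (R := ℂ) (L := ℂ ⊗[ℝ] L)
  have : Nontrivial (ℂ ⊗[ℝ] L) := by
    by_contra h
    rw [not_nontrivial_iff_subsingleton] at h
    exact hna ⟨fun _ _ => Subsingleton.elim _ _⟩
  obtain ⟨μ, hμ⟩ := Module.End.exists_eigenvalue S
  let I : LieIdeal ℂ (ℂ ⊗[ℝ] L) :=
    { S.eigenspace μ with
      lie_mem := by
        intro z x hx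
        change x ∈ S.eigenspace μ at hx
        change ⁅z, x⁆ ∈ S.eigenspace μ
        rw [Module.End.mem_eigenspace_iff] at hx ⊢
        rw [hS, hx]
        exact ls μ z x }
  have hI : I = ⊤ := by
    refine (LieAlgebra.IsSimple.eq_bot_or_eq_top I).resolve_left fun h => hμ ?_
    have : I.toSubmodule = ⊥ := by rw [h]; rfl
    exact this
  have hSμ : ∀ x : ℂ ⊗[ℝ] L, S x = μ • x := by
    intro x
    have : x ∈ I := by rw [hI]; trivial
    exact Module.End.mem_eigenspace_iff.mp this
  have hTc : ∀ x, T x = μ.re • x := by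
    intro x
    have h := congrArg ((TensorProduct.lid ℝ L) ∘ (LinearMap.rTensor L Complex.reLm))
      (hSμ (1 ⊗ₜ x))
    simpa [S, TensorProduct.smul_tmul'] using h
  refine ⟨μ.re, fun X Y => ?_⟩
  rw [← hT, hTc, map_smul, LinearMap.smul_apply, smul_eq_mul]
  rfl
end

section
/- There is no finite-dimensional simple complex Lie algebra of complex dimension 7, and there is no finite-dimensional simple complex Lie algebra of complex dimension 11. -/
open Module in
lemma aux_finrank_eq {K L : Type*} [Field K] [CharZero K] [LieRing L] [LieAlgebra K L]
    [FiniteDimensional K L] [LieAlgebra.IsKilling K L] (H : LieSubalgebra K L)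
    [H.IsCartanSubalgebra] [LieModule.IsTriangularizable K H L] [Nontrivial L] :
    finrank K L = finrank K H + Nat.card H.root := by
  classical
  have hint : DirectSum.IsInternal
      (fun χ : LieModule.Weight K H L ↦ (LieModule.genWeightSpace L χ).toSubmodule) :=
    (DirectSum.isInternal_submodule_iff_iSupIndep_and_iSup_eq_top _).mpr
      ⟨LieSubmodule.iSupIndep_toSubmodule.mpr (LieModule.iSupIndep_genWeightSpace' K H L),
       LieSubmodule.iSup_toSubmodule_eq_top.mpr (LieModule.iSup_genWeightSpace_eq_top' K H L)⟩
  have e := LinearEquiv.ofBijective (DirectSum.coeLinearMap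
      (fun χ : LieModule.Weight K H L ↦ (LieModule.genWeightSpace L χ).toSubmodule)) hint
  rw [← e.finrank_eq, Module.finrank_directSum]
  rw [← Finset.sum_filter_add_sum_filter_not Finset.univ
    (fun χ : LieModule.Weight K H L ↦ χ.IsZero)]
  congr 1
  · have h0 : (Finset.univ.filter (fun χ : LieModule.Weight K H L ↦ χ.IsZero)) = {0} := by
      ext χ
      simp only [Finset.mem_filter, Finset.mem_univ, true_and, Finset.mem_singleton]
      constructor
      · intro h
        ext x
        rw [h.eq]; rfl
      · rintro rfl
        exact LieModule.Weight.isZero_zero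
    rw [h0, Finset.sum_singleton]
    have h1 : LieModule.genWeightSpace L ((0 : LieModule.Weight K H L) : H → K)
      = H.toLieSubmodule := by
      rw [← LieAlgebra.rootSpace_zero_eq K L H]; rfl
    rw [h1]
    rfl
  · rw [Finset.sum_congr rfl (g := fun _ ↦ 1)]
    · rw [← Finset.card_eq_sum_ones, Nat.card_eq_fintype_card, Fintype.card_coe]
    · intro χ hχ
      exact LieAlgebra.IsKilling.finrank_rootSpace_eq_one χ (by simpa using hχ)

open Module in
lemma aux_two_mul_le {K V : Type*} [Field K] [CharZero K] [AddCommGroup V] [Module K V]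
    [FiniteDimensional K V] [DecidableEq V] (Φ : Finset V) (hneg : ∀ v ∈ Φ, -v ∈ Φ)
    (hspan : Submodule.span K (Φ : Set V) = ⊤) : 2 * finrank K V ≤ Φ.card := by
  obtain ⟨b, hb, hs, hl⟩ := exists_linearIndependent K (Φ : Set V)
  have hfin : b.Finite := Φ.finite_toSet.subset hb
  lift b to Finset V using hfin
  have hcard : finrank K V = b.card := by
    rw [← finrank_top, ← hspan, ← hs]
    exact finrank_span_finset_eq_card hl
  have hdisj : Disjoint b (b.image (fun v ↦ -v)) := by
    rw [Finset.disjoint_left]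
    intro v hv hv'
    obtain ⟨w, hw, hwv⟩ := Finset.mem_image.mp hv'
    have hv0 : v ≠ 0 := hl.ne_zero ⟨v, hv⟩
    have hl' : LinearIndepOn K id (b : Set V) := hl
    by_cases hvw : v = w
    · subst hvw
      have : (2 : K) • v = 0 := by rw [two_smul]; nth_rewrite 1 [← hwv]; simp
      rcases smul_eq_zero.mp this with h | h
      · norm_num at h
      · exact hv0 h
    · have h2 := (LinearIndepOn.pair_iff id hvw).mp
        (hl'.mono (show ({v, w} : Set V) ⊆ _ by
          intro x hx; rcases hx with rfl | rfl <;> assumption)) 1 1 (by simp [← hwv])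
      simp at h2
  have : (b ∪ b.image (fun v ↦ -v)).card ≤ Φ.card := by
    apply Finset.card_le_card
    intro v hv
    rcases Finset.mem_union.mp hv with h | h
    · exact hb h
    · obtain ⟨w, hw, rfl⟩ := Finset.mem_image.mp h
      exact hneg _ (hb hw)
  rw [Finset.card_union_of_disjoint hdisj, Finset.card_image_of_injective _ neg_injective] at this
  lia

lemma aux_even {K V : Type*} [Field K] [CharZero K] [AddCommGroup V] [Module K V]
    (Φ : Finset V) (hneg : ∀ v ∈ Φ, -v ∈ Φ)
    (h0 : (0 : V) ∉ Φ) : Even Φ.card := by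
  have : ∑ v ∈ Φ, (1 : ZMod 2) = 0 := by
    refine Finset.sum_involution (fun v _ ↦ -v) (fun _ _ ↦ by decide) ?_ hneg (by simp)
    intro v hv _ h
    have h2 : (2 : K) • v = 0 := by rw [two_smul]; nth_rewrite 1 [← h]; simp
    rcases smul_eq_zero.mp h2 with h | h
    · norm_num at h
    · exact h0 (h ▸ hv)
  rw [Finset.sum_const, nsmul_one] at this
  rwa [ZMod.natCast_eq_zero_iff_even] at this

open Module in
lemma aux_exists_nonorth {ι K M N : Type*} [Field K] [CharZero K]
    [AddCommGroup M] [Module K M] [AddCommGroup N] [Module K N]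
    (P : RootPairing ι K M N) [P.IsIrreducible] (h : 2 ≤ finrank K M) (i : ι) :
    ∃ j, P.root j ≠ P.root i ∧ P.root j ≠ - P.root i ∧ P.coroot' j (P.root i) ≠ 0 := by
  by_contra! hc
  have htop : (K ∙ P.root i) = ⊤ := by
    refine RootPairing.IsIrreducible.eq_top_of_invtSubmodule_reflection (P := P) _ (fun j ↦ ?_) ?_
    · rw [Module.End.mem_invtSubmodule, Submodule.span_le, Set.singleton_subset_iff]
      simp only [SetLike.mem_coe, Submodule.mem_comap, LinearEquiv.coe_coe,
        RootPairing.reflection_apply]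
      have hm : P.root i ∈ (K ∙ P.root i) := Submodule.mem_span_singleton_self _
      by_cases h1 : P.root j = P.root i
      · rw [h1]; exact sub_mem hm (Submodule.smul_mem _ _ hm)
      by_cases h2 : P.root j = -P.root i
      · rw [h2]; exact sub_mem hm (Submodule.smul_mem _ _ (neg_mem hm))
      rw [hc j h1 h2]; simp
    · simpa using P.ne_zero i
  have := finrank_span_singleton (K := K) (P.ne_zero i)
  rw [htop, finrank_top] at this
  lia

open Module in
lemma aux_rank_three {ι K M N : Type*} [Finite ι] [Field K] [CharZero K]
    [AddCommGroup M] [Module K M] [AddCommGroup N] [Module K N] [FiniteDimensional K M]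
    (P : RootPairing ι K M N) [P.IsIrreducible] [P.IsRootSystem] [P.IsReduced]
    (h : finrank K M = 3) (Φ : Finset M) (hΦ : (Φ : Set M) = Set.range P.root) :
    9 ≤ Φ.card := by
  classical
  have hmem : ∀ i, P.root i ∈ Φ := fun i ↦ by
    rw [← Finset.mem_coe, hΦ]; exact ⟨i, rfl⟩
  have hneg : ∀ v ∈ Φ, -v ∈ Φ := by
    intro v hv
    rw [← Finset.mem_coe, hΦ] at hv ⊢
    obtain ⟨i, rfl⟩ := hv
    exact ⟨P.reflectionPerm i i, by simp⟩
  have hrefl : ∀ i j, P.root i - P.coroot' j (P.root i) • P.root j ∈ Φ := by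
    intro i j
    rw [← RootPairing.reflection_apply, ← RootPairing.root_reflectionPerm]
    exact hmem _
  have hne : Nonempty ι := by
    by_contra hc
    rw [not_nonempty_iff] at hc
    have := RootPairing.IsRootSystem.span_root_eq_top (P := P)
    rw [Set.range_eq_empty, Submodule.span_empty] at this
    have h3 := finrank_top K M
    rw [← this, finrank_bot] at h3
    lia
  obtain ⟨i⟩ := hne
  obtain ⟨j, hj1, hj2, hj3⟩ := aux_exists_nonorth P (by lia) i
  have hli : LinearIndependent K ![P.root j, P.root i] :=
    RootPairing.IsReduced.linearIndependent P (by rintro rfl; exact hj1 rfl) hj2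
  set n := P.coroot' j (P.root i) with hn
  let W := Submodule.span K ({P.root j, P.root i} : Set M)
  have hjW : P.root j ∈ W := Submodule.subset_span (by simp)
  have hiW : P.root i ∈ W := Submodule.subset_span (by simp)
  have hW : W ≠ ⊤ := by
    intro hW
    have h4 := finrank_span_le_card (R := K) ({P.root j, P.root i} : Set M)
    change finrank K W ≤ _ at h4
    rw [hW, finrank_top, h] at h4
    have : ({P.root j, P.root i} : Set M).toFinset.card ≤ 2 := by
      rw [Set.toFinset_insert, Set.toFinset_singleton]
      exact Finset.card_le_two
    lia
  obtain ⟨m, hm⟩ : ∃ m, P.root m ∉ W := by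
    by_contra! hc
    apply hW
    rw [eq_top_iff, ← RootPairing.IsRootSystem.span_root_eq_top (P := P), Submodule.span_le]
    rintro _ ⟨k, rfl⟩
    exact hc k
  -- a third root outside `W`
  obtain ⟨t, htΦ, htW, ht1, ht2⟩ :
      ∃ t ∈ Φ, t ∉ W ∧ t ≠ P.root m ∧ t ≠ -P.root m := by
    obtain ⟨k, hk1, hk2, hk3⟩ := aux_exists_nonorth P (by lia) m
    by_cases hkW : P.root k ∈ W
    · refine ⟨_, hrefl m k, ?_, ?_, ?_⟩
      · intro hc
        apply hm
        simpa using add_mem hc (W.smul_mem (P.coroot' k (P.root m)) hkW)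
      · intro hc
        rw [sub_eq_self, smul_eq_zero] at hc
        exact hc.elim hk3 (P.ne_zero k)
      · intro hc
        apply hm
        have h2 : (2 : K) • P.root m = P.coroot' k (P.root m) • P.root k := by
          rw [two_smul]
          rw [sub_eq_iff_eq_add] at hc
          nth_rewrite 1 [hc]
          abel
        have h3 : (2 : K) • P.root m ∈ W := h2 ▸ W.smul_mem _ hkW
        exact (W.smul_mem_iff two_ne_zero).mp h3
    · exact ⟨_, hmem k, hkW, hk1, hk2⟩
  -- six roots in `W`
  let f : K × K → M := fun p ↦ p.1 • P.root j + p.2 • P.root i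
  have hf : Function.Injective f := by
    intro p q hpq
    have := LinearIndependent.pair_iff.mp hli (p.1 - q.1) (p.2 - q.2) (by
      have h0 : f p - f q = 0 := sub_eq_zero.mpr hpq
      rw [← h0]; simp only [f, sub_smul]; abel)
    exact Prod.ext (sub_eq_zero.mp this.1) (sub_eq_zero.mp this.2)
  let A : Finset (K × K) := {(1, 0), (-1, 0), (0, 1), (0, -1), (-n, 1), (n, -1)}
  have hA : A.card = 6 := by
    have h11 : (1 : K) ≠ -1 := by norm_num
    have h12 : (-1 : K) ≠ 1 := by norm_num
    simp only [A]
    repeat rw [Finset.card_insert_of_notMem]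
    · simp
    all_goals simp [hj3, Ne.symm hj3, h11, h12]
  let B : Finset M := {P.root m, -P.root m, t}
  have hB : B.card = 3 := by
    have : P.root m ≠ -P.root m := by
      intro hc
      have h2 : (2 : K) • P.root m = 0 := by rw [two_smul]; nth_rewrite 1 [hc]; simp
      rcases smul_eq_zero.mp h2 with h | h
      · norm_num at h
      · exact P.ne_zero m h
    exact Finset.card_eq_three.mpr ⟨_, _, _, this, ht1.symm, ht2.symm, rfl⟩
  have hAW : ∀ v ∈ A.image f, v ∈ W := by
    intro v hv
    obtain ⟨p, -, rfl⟩ := Finset.mem_image.mp hv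
    exact add_mem (W.smul_mem _ hjW) (W.smul_mem _ hiW)
  have hBW : ∀ v ∈ B, v ∉ W := by
    intro v hv
    simp only [B, Finset.mem_insert, Finset.mem_singleton] at hv
    rcases hv with rfl | rfl | rfl
    · exact hm
    · simpa using hm
    · exact htW
  have hdisj : Disjoint (A.image f) B :=
    Finset.disjoint_left.mpr fun v h1 h2 ↦ hBW v h2 (hAW v h1)
  have hsub : A.image f ∪ B ⊆ Φ := by
    intro v hv
    have hr := hrefl i j
    rw [← hn] at hr
    rcases Finset.mem_union.mp hv with hv | hv
    · obtain ⟨p, hp, rfl⟩ := Finset.mem_image.mp hv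
      simp only [A, Finset.mem_insert, Finset.mem_singleton] at hp
      rcases hp with rfl | rfl | rfl | rfl | rfl | rfl
      · simpa [f] using hmem j
      · simpa [f] using hneg _ (hmem j)
      · simpa [f] using hmem i
      · simpa [f] using hneg _ (hmem i)
      · convert hr using 1
        simp only [f, neg_smul, one_smul]; abel
      · convert hneg _ hr using 1
        simp only [f, neg_smul, one_smul]; abel
    · simp only [B, Finset.mem_insert, Finset.mem_singleton] at hv
      rcases hv with rfl | rfl | rfl
      · exact hmem m
      · exact hneg _ (hmem m)
      · exact htΦ
  have := Finset.card_le_card hsub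
  rw [Finset.card_union_of_disjoint hdisj, Finset.card_image_of_injective _ hf, hA, hB] at this
  exact this

open Module in
lemma aux_rank_one {ι K M N : Type*} [Field K] [CharZero K]
    [AddCommGroup M] [Module K M] [AddCommGroup N] [Module K N]
    (P : RootPairing ι K M N) [P.IsReduced]
    (h : finrank K M = 1) (Φ : Finset M) (hΦ : (Φ : Set M) = Set.range P.root) :
    Φ.card ≤ 2 := by
  classical
  rcases isEmpty_or_nonempty ι with hι | ⟨⟨i⟩⟩
  · rw [Set.range_eq_empty, Finset.coe_eq_empty] at hΦ
    simp [hΦ]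
  · refine (Finset.card_le_card (t := {P.root i, -P.root i}) ?_).trans Finset.card_le_two
    intro v hv
    rw [← Finset.mem_coe, hΦ] at hv
    obtain ⟨j, rfl⟩ := hv
    by_contra hc
    simp only [Finset.mem_insert, Finset.mem_singleton, not_or] at hc
    have hli : LinearIndependent K ![P.root j, P.root i] :=
      RootPairing.IsReduced.linearIndependent P (by rintro rfl; exact hc.1 rfl) hc.2
    have : FiniteDimensional K M := Module.finite_of_finrank_eq_succ h
    have := hli.fintype_card_le_finrank
    simp [h] at this

/-- There is no finite-dimensional simple complex Lie algebra of complex dimension `7`, and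
none of complex dimension `11`. -/
theorem no_simple_complex_lie_algebra_of_dim_seven_or_eleven
    (L : Type*) [LieRing L] [LieAlgebra ℂ L] [FiniteDimensional ℂ L]
    (hL : LieAlgebra.IsSimple ℂ L) :
    Module.finrank ℂ L ≠ 7 ∧ Module.finrank ℂ L ≠ 11 := by
  classical
  obtain ⟨H, hH⟩ : ∃ H : LieSubalgebra ℂ L, H.IsCartanSubalgebra :=
    (LieAlgebra.exists_isCartanSubalgebra_engel ℂ L).elim fun x hx ↦ ⟨_, hx⟩
  have hnt : Nontrivial L := by
    by_contra hc
    rw [not_nontrivial_iff_subsingleton] at hc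
    exact hL.non_abelian inferInstance
  have hdim := aux_finrank_eq (K := ℂ) H
  let P := LieAlgebra.IsKilling.rootSystem H
  let Φ : Finset (Module.Dual ℂ H) := Finset.univ.image P.root
  have hΦ : (Φ : Set _) = Set.range P.root := by simp [Φ]
  have hcard : Φ.card = Nat.card H.root := by
    rw [Finset.card_image_of_injective _ P.root.injective, Finset.card_univ,
      Nat.card_eq_fintype_card]
  have hneg : ∀ v ∈ Φ, -v ∈ Φ := by
    intro v hv
    rw [← Finset.mem_coe, hΦ] at hv ⊢
    obtain ⟨i, rfl⟩ := hv
    exact ⟨P.reflectionPerm i i, by simp⟩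
  have h0 : (0 : Module.Dual ℂ H) ∉ Φ := by
    intro hv
    rw [← Finset.mem_coe, hΦ] at hv
    obtain ⟨i, hi⟩ := hv
    exact P.ne_zero i hi
  have hr : Module.finrank ℂ (Module.Dual ℂ H) = Module.finrank ℂ H :=
    Subspace.dual_finrank_eq
  have h2 := aux_two_mul_le (K := ℂ) Φ hneg
    (by rw [hΦ]; exact RootPairing.IsRootSystem.span_root_eq_top (P := P))
  have he := aux_even (K := ℂ) Φ hneg h0
  have h1 : Module.finrank ℂ (Module.Dual ℂ H) = 1 → Φ.card ≤ 2 :=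
    fun h ↦ aux_rank_one P h Φ hΦ
  have h3 : Module.finrank ℂ (Module.Dual ℂ H) = 3 → 9 ≤ Φ.card :=
    fun h ↦ aux_rank_three P h Φ hΦ
  rw [hr] at h1 h2 h3
  rw [hcard] at h1 h2 h3 he
  have hpos : Module.finrank ℂ H ≠ 0 := by
    have := RootPairing.IsIrreducible.nontrivial P
    rw [← hr]
    exact Module.finrank_pos.ne'
  rw [even_iff_two_dvd] at he
  constructor <;> intro h7 <;> rw [h7] at hdim <;>
    · have hle : Module.finrank ℂ H ≤ 3 := by lia
      generalize Module.finrank ℂ H = l at *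
      interval_cases l <;> lia
end
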